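/- Let P₁, P₂, d₁₂ > 0 and d₁₃² = 1/4 + (√3/2 + d₁₂)². If P₁/d₁₂² ≤ P₂/(1 + P₁/d₁₃²), then R_1-hop = R_omniscient = (1/2) log₂(1 + P₁/d₁₂²); that is, when the source–relay link is the bottleneck, one-hop myopic decode-forward achieves the same common rate as omniscient decode-forward. -/

import Mathlib

/-!
The relay's rate `R2'` decreases in the power split `α`, so the omniscient rate is at most
`R2' 0 = ½ log₂(1 + P₁/d₁₂²)`. The bound is attained at `α = 0`: there the destination's SNR
`P₁/d₁₃² + P₂` exceeds `P₂/(1 + P₁/d₁₃²)`, hence also the relay's SNR `P₁/d₁₂²`.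
For the one-hop rate the hypothesis says directly that the relay term is the minimum.
-/

open Real

/-- Reception rate at the relay (node 2) under omniscient decode-forward for
the common message in the four-node Gaussian broadcast relay channel. -/
noncomputable def R2' (P1 d12 : ℝ) (a : ℝ) : ℝ :=
  (1 / 2) * Real.logb 2 (1 + (1 - a) * P1 / d12 ^ 2)

/-- Reception rate at destination 3 (and, by symmetry, destination 4) under
omniscient decode-forward, where `d13sq = d₁₃² = 1/4 + (√3/2 + d₁₂)²`. -/
noncomputable def R3' (P1 P2 d13sq : ℝ) (a : ℝ) : ℝ :=
  (1 / 2) * Real.logb 2 (1 + P1 / d13sq + P2 + 2 * Real.sqrt (a * P1 * P2 / d13sq))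

/-- Achievable common rate of omniscient decode-forward: the supremum over
power splits `α ∈ [0,1]` of `min{R'₂(α), R'₃(α)}`. -/
noncomputable def Romniscient (P1 P2 d12 d13sq : ℝ) : ℝ :=
  sSup {r : ℝ | ∃ a ∈ Set.Icc (0 : ℝ) 1,
    r = min (R2' P1 d12 a) (R3' P1 P2 d13sq a)}

/-- Achievable common rate of one-hop myopic decode-forward. -/
noncomputable def R1hop (P1 P2 d12 d13sq : ℝ) : ℝ :=
  min ((1 / 2) * Real.logb 2 (1 + P1 / d12 ^ 2))
      ((1 / 2) * Real.logb 2 (1 + P2 / (1 + P1 / d13sq)))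

/-- When the source–relay link is the bottleneck, i.e.
`P₁/d₁₂² ≤ P₂/(1 + P₁/d₁₃²)`, one-hop myopic decode-forward achieves the same
common rate `½ log₂(1 + P₁/d₁₂²)` as omniscient decode-forward. -/
theorem myopic_eq_omniscient_brc_bottleneck
    (P1 P2 d12 : ℝ) (hP1 : 0 < P1) (hP2 : 0 < P2) (hd12 : 0 < d12)
    (d13sq : ℝ) (hd13 : d13sq = 1 / 4 + (Real.sqrt 3 / 2 + d12) ^ 2)
    (hbottleneck : P1 / d12 ^ 2 ≤ P2 / (1 + P1 / d13sq)) :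
    R1hop P1 P2 d12 d13sq = (1 / 2) * Real.logb 2 (1 + P1 / d12 ^ 2)
    ∧ Romniscient P1 P2 d12 d13sq = (1 / 2) * Real.logb 2 (1 + P1 / d12 ^ 2) := by
  have hd : 0 < d13sq := by rw [hd13]; positivity
  have hx : 0 < P1 / d12 ^ 2 := by positivity
  have hy : 0 < P1 / d13sq := by positivity
  refine ⟨?_, ?_⟩
  · unfold R1hop
    apply min_eq_left
    gcongr
    norm_num
  · have h2 : R2' P1 d12 0 = (1 / 2) * Real.logb 2 (1 + P1 / d12 ^ 2) := by
      unfold R2'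
      rw [sub_zero, one_mul]
    -- Interference at the destination only lowers the one-hop rate, so the bottleneck
    -- hypothesis also makes the relay the weaker receiver at `α = 0`.
    have hP : P2 / (1 + P1 / d13sq) ≤ P2 := div_le_self hP2.le (by linarith)
    have h3 : R2' P1 d12 0 ≤ R3' P1 P2 d13sq 0 := by
      rw [h2]
      simp only [R3', zero_mul, zero_div, Real.sqrt_zero, mul_zero, add_zero]
      refine mul_le_mul_of_nonneg_left ?_ (by norm_num)
      exact Real.logb_le_logb_of_le (by norm_num) (by linarith) (by linarith)
    refine IsGreatest.csSup_eq ⟨⟨0, by simp, ?_⟩, ?_⟩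
    · rw [min_eq_left h3, h2]
    · rintro r ⟨a, ⟨ha0, ha1⟩, rfl⟩
      refine (min_le_left _ _).trans ?_
      unfold R2'
      have h1a : 0 ≤ 1 - a := by linarith
      have hpos : 0 ≤ (1 - a) * P1 / d12 ^ 2 := by positivity
      have hle : (1 - a) * P1 / d12 ^ 2 ≤ P1 / d12 ^ 2 := by
        gcongr
        nlinarith
      refine mul_le_mul_of_nonneg_left ?_ (by norm_num)
      exact Real.logb_le_logb_of_le (by norm_num) (by linarith) (by linarith)
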